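/- Let M be a finite compatible subset of a homogeneous effect algebra E and let a, b ∈ M with b ≤ a. Then M ∪ {a ⊖ b} is a compatible set. -/

import Mathlib

/-- An effect algebra: a partial commutative, associative operation `oplus`
(with definedness encoded via `Option`), constants `zero` and `one`,
unique orthosupplements, and `a ⊕ 1` defined only for `a = 0`. -/
structure EffectAlgebra (E : Type*) where
  oplus : E → E → Option E
  zero : E
  one : E
  comm : ∀ a b, oplus a b = oplus b a
  assoc : ∀ a b c ab abc, oplus a b = some ab → oplus ab c = some abc →
    ∃ bc, oplus b c = some bc ∧ oplus a bc = some abc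
  compl_exists : ∀ a, ∃ b, oplus a b = some one
  compl_unique : ∀ a b c, oplus a b = some one → oplus a c = some one → b = c
  add_one : ∀ a b, oplus a one = some b → a = zero

namespace EffectAlgebra

variable {E : Type*} (A : EffectAlgebra E)

/-- `a ⊥ b` : the sum `a ⊕ b` is defined. -/
def Perp (a b : E) : Prop := (A.oplus a b).isSome

/-- `a ≤ b` iff `b = a ⊕ c` for some `c`. -/
def le (a b : E) : Prop := ∃ c, A.oplus a c = some b

/-- The orthosupplement `a'`: the unique `b` with `a ⊕ b = 1`. -/
noncomputable def compl (a : E) : E :=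
  @Classical.epsilon E ⟨A.zero⟩ fun b => A.oplus a b = some A.one

/-- `a ⊖ b` : the unique `c` with `b ⊕ c = a` (defined when `b ≤ a`). -/
noncomputable def ominus (a b : E) : E :=
  @Classical.epsilon E ⟨A.zero⟩ fun c => A.oplus b c = some a

/-- Homogeneity. -/
def Homogeneous : Prop :=
  ∀ u v₁ v₂ s, A.oplus v₁ v₂ = some s → A.le u s → A.le u (A.compl s) →
    ∃ u₁ u₂, A.le u₁ v₁ ∧ A.le u₂ v₂ ∧ A.oplus u₁ u₂ = some u

/-- Riesz decomposition property. -/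
def RDP : Prop :=
  ∀ u v₁ v₂ s, A.oplus v₁ v₂ = some s → A.le u s →
    ∃ u₁ u₂, A.le u₁ v₁ ∧ A.le u₂ v₂ ∧ A.oplus u₁ u₂ = some u

/-- The sum `c₁ ⊕ … ⊕ cₙ` of a finite family (a list); `some s` iff the family
is orthogonal with sum `s`. -/
def sumList : List E → Option E
  | [] => some A.zero
  | x :: xs => (sumList xs).bind fun s => A.oplus x s

/-- The subfamily of `C` indexed by a set of indices `S ⊆ {1,…,n}`. -/
def pickList (C : List E) (S : Finset (Fin C.length)) : List E :=
  (S.sort (· ≤ ·)).map C.get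

/-- `C` is an orthogonal cover of `M`. -/
def IsCoverOf (C : List E) (M : Set E) : Prop :=
  (A.sumList C).isSome ∧
    ∀ a ∈ M, ∃ S : Finset (Fin C.length), A.sumList (pickList C S) = some a

/-- `M` is compatible with covers in `X`: every finite subset of `M` has an
orthogonal cover with range contained in `X`. -/
def CompatWithCoversIn (M X : Set E) : Prop :=
  ∀ F : Finset E, ↑F ⊆ M →
    ∃ C : List E, (∀ c ∈ C, c ∈ X) ∧ A.IsCoverOf C ↑F

/-- `M` is compatible (with covers in `E`). -/
def Compatible (M : Set E) : Prop := A.CompatWithCoversIn M Set.univ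

/-- `M` is internally compatible. -/
def InternallyCompatible (M : Set E) : Prop := A.CompatWithCoversIn M M

/-- `D` is a refinement of `C`: a partition `{P i}` of the index set of `D`
with `C i = ⊕_{j ∈ P i} D j`. -/
def IsRefinement (D C : List E) : Prop :=
  ∃ P : Fin C.length → Finset (Fin D.length),
    (∀ i j, i ≠ j → Disjoint (P i) (P j)) ∧
    (∀ k, ∃ i, k ∈ P i) ∧
    (∀ i, A.sumList (pickList D (P i)) = some (C.get i))

/-- One step of the closure construction `M ↦ M₁`. -/
def closureStep (M : Set E) : Set E :=
  {x | ∃ y ∈ M, A.le x y ∧ A.le x (A.compl y)} ∪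
  {z | ∃ y ∈ M, ∃ x, A.le x y ∧ A.le x (A.compl y) ∧ A.oplus x z = some y}

/-- The sets `Mₙ`. -/
def closureSeq (M : Set E) (n : ℕ) : Set E := (A.closureStep)^[n] M

/-- The closure `M̄ = ⋃ₙ Mₙ`. -/
def closure (M : Set E) : Set E := ⋃ n, A.closureSeq M n

/-- `B` is a sub-effect algebra of `E`. -/
def IsSubEA (B : Set E) : Prop :=
  A.one ∈ B ∧ ∀ a ∈ B, ∀ b ∈ B, A.le b a → A.ominus a b ∈ B

/-- The Riesz decomposition property for (the effect algebra on) a subset `B`. -/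
def RDPOn (B : Set E) : Prop :=
  ∀ u v₁ v₂ s, u ∈ B → v₁ ∈ B → v₂ ∈ B → A.oplus v₁ v₂ = some s → A.le u s →
    ∃ u₁ u₂, u₁ ∈ B ∧ u₂ ∈ B ∧ A.le u₁ v₁ ∧ A.le u₂ v₂ ∧ A.oplus u₁ u₂ = some u

/-- Homogeneity for (the effect algebra on) a subset `B`. -/
def HomogeneousOn (B : Set E) : Prop :=
  ∀ u v₁ v₂ s, u ∈ B → v₁ ∈ B → v₂ ∈ B → A.oplus v₁ v₂ = some s →
    A.le u s → A.le u (A.compl s) →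
    ∃ u₁ u₂, u₁ ∈ B ∧ u₂ ∈ B ∧ A.le u₁ v₁ ∧ A.le u₂ v₂ ∧ A.oplus u₁ u₂ = some u

/-- A block: a maximal sub-effect algebra satisfying the Riesz decomposition
property. -/
def IsBlock (B : Set E) : Prop :=
  A.IsSubEA B ∧ A.RDPOn B ∧
    ∀ B', A.IsSubEA B' → A.RDPOn B' → B ⊆ B' → B' = B

/-- A block of the sub-effect algebra on `F`: a maximal sub-effect algebra of
`F` satisfying the Riesz decomposition property. -/
def IsBlockIn (F B : Set E) : Prop :=
  B ⊆ F ∧ A.IsSubEA B ∧ A.RDPOn B ∧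
    ∀ B', B' ⊆ F → A.IsSubEA B' → A.RDPOn B' → B ⊆ B' → B' = B

/-- `a` is sharp: the infimum `a ∧ a'` exists and equals `0`, i.e. every common
lower bound of `a` and `a'` is `0`. -/
def Sharp (a : E) : Prop :=
  ∀ b, A.le b a → A.le b (A.compl a) → b = A.zero

/-- `a` is sharp in the sub-effect algebra on `F`. -/
def SharpIn (F : Set E) (a : E) : Prop :=
  a ∈ F ∧ ∀ b ∈ F, A.le b a → A.le b (A.compl a) → b = A.zero

/-- `a` is principal. -/
def Principal (a : E) : Prop :=
  ∀ x y s, A.le x a → A.le y a → A.oplus x y = some s → A.le s a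

/-- `a` is principal in the sub-effect algebra on `B`. -/
def PrincipalIn (B : Set E) (a : E) : Prop :=
  a ∈ B ∧ ∀ x ∈ B, ∀ y ∈ B, ∀ s, A.le x a → A.le y a →
    A.oplus x y = some s → A.le s a

/-- `a` is central: principal, and every `b` has a unique decomposition
`b = b₁ ⊕ b₂` with `b₁ ≤ a`, `b₂ ≤ a'`. -/
def Central (a : E) : Prop :=
  A.Principal a ∧ ∀ b, ∃! p : E × E,
    A.le p.1 a ∧ A.le p.2 (A.compl a) ∧ A.oplus p.1 p.2 = some b

/-- `a` is central in the sub-effect algebra on `B`. -/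
def CentralIn (B : Set E) (a : E) : Prop :=
  A.PrincipalIn B a ∧ ∀ b ∈ B, ∃! p : E × E,
    p.1 ∈ B ∧ p.2 ∈ B ∧ A.le p.1 a ∧ A.le p.2 (A.compl a) ∧
      A.oplus p.1 p.2 = some b

/-- The center `C(E)`. -/
def center : Set E := {a | A.Central a}

/-- The compatibility center `K(E)`: the intersection of all blocks. -/
def compatCenter : Set E := {x | ∀ B, A.IsBlock B → x ∈ B}

end EffectAlgebra

namespace EffectAlgebra

variable {E : Type*} (A : EffectAlgebra E)

theorem aux_oplus_zero (a : E) : A.oplus a A.zero = some a := by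
  obtain ⟨b, hb⟩ := A.compl_exists A.one
  have hb0 : b = A.zero := A.add_one b A.one (by rw [A.comm]; exact hb)
  subst hb0
  obtain ⟨a', ha'⟩ := A.compl_exists a
  have h1 : A.oplus a' a = some A.one := by rw [A.comm]; exact ha'
  obtain ⟨d, hd, hd'⟩ := A.assoc _ _ _ _ _ h1 hb
  have := A.compl_unique a' a d h1 hd'
  rw [hd, this]

/-- Partial elements: `Option E` as a total commutative monoid. -/
def PE (_A : EffectAlgebra E) : Type _ := Option E

/-- Embedding of elements into partial elements. -/
def emb (x : E) : PE A := (some x : Option E)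

/-- Identity cast into partial elements. -/
def toPE (x : Option E) : PE A := x

theorem emb_inj {x y : E} (h : A.emb x = A.emb y) : x = y := Option.some.inj h

/-- Total addition on partial elements. -/
def padd (x y : Option E) : Option E := x.bind fun a => y.bind fun b => A.oplus a b

theorem padd_comm (x y : Option E) : A.padd x y = A.padd y x := by
  cases x <;> cases y <;> simp [padd, A.comm]

theorem padd_assoc_imp (x y z : Option E) (r : E) (h : A.padd (A.padd x y) z = some r) :
    A.padd x (A.padd y z) = some r := by
  cases x with
  | none => simp [padd] at h
  | some a => cases y with
    | none => simp [padd] at h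
    | some b => cases z with
      | none => simp [padd] at h
      | some c =>
        simp only [padd, Option.bind_some] at h ⊢
        obtain ⟨ab, h1, h2⟩ := Option.bind_eq_some_iff.1 h
        obtain ⟨bc, h3, h4⟩ := A.assoc _ _ _ _ _ h1 h2
        simp [h3, h4]

theorem padd_assoc (x y z : Option E) :
    A.padd (A.padd x y) z = A.padd x (A.padd y z) := by
  apply Option.ext
  intro r
  constructor
  · exact A.padd_assoc_imp x y z r
  · intro h
    rw [A.padd_comm, A.padd_comm x y]
    apply A.padd_assoc_imp
    rw [A.padd_comm, A.padd_comm z y]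
    exact h

instance instPEZero : Zero (PE A) := ⟨A.emb A.zero⟩

instance instPEAdd : Add (PE A) := ⟨fun x y => A.padd x y⟩

instance instPE : AddCommMonoid (PE A) where
  add_assoc := A.padd_assoc
  add_comm := A.padd_comm
  zero_add x := by
    change A.padd (some A.zero) x = x
    cases x with
    | none => rfl
    | some a => simp [padd, A.comm A.zero a, A.aux_oplus_zero]
  add_zero x := by
    change A.padd x (some A.zero) = x
    cases x with
    | none => rfl
    | some a => simp [padd, A.aux_oplus_zero]
  nsmul := nsmulRec

theorem emb_add (x y z : E) : A.emb x + A.emb y = A.emb z ↔ A.oplus x y = some z := Iff.rfl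

theorem emb_zero : A.emb A.zero = 0 := rfl

theorem exists_left {x y : PE A} {z : E} (h : x + y = A.emb z) : ∃ w, x = A.emb w := by
  cases x with
  | none => cases h
  | some a => exact ⟨a, rfl⟩

theorem exists_right {x y : PE A} {z : E} (h : x + y = A.emb z) : ∃ w, y = A.emb w :=
  A.exists_left (x := y) (y := x) (by rw [add_comm]; exact h)

theorem emb_cancel {x y : PE A} {a s : E} (h1 : A.emb a + x = A.emb s) (h2 : A.emb a + y = A.emb s) :
    x = y := by
  obtain ⟨b, rfl⟩ := A.exists_right h1
  obtain ⟨c, rfl⟩ := A.exists_right h2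
  obtain ⟨s', hs⟩ := A.compl_exists s
  rw [← emb_add] at hs
  have e1 : (A.emb a + A.emb s') + A.emb b = A.emb A.one := by
    rw [← hs, ← h1]; abel
  have e2 : (A.emb a + A.emb s') + A.emb c = A.emb A.one := by
    rw [← hs, ← h2]; abel
  obtain ⟨w, hw⟩ := A.exists_left e1
  rw [hw, emb_add] at e1 e2
  rw [A.compl_unique _ _ _ e1 e2]

theorem eq_zero_of_add {u c : E} (h : A.emb u + A.emb c = A.emb A.zero) : u = A.zero := by
  have e : (A.emb u + A.emb A.one) + A.emb c = A.emb A.one := by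
    have : (A.emb u + A.emb A.one) + A.emb c = (A.emb u + A.emb c) + A.emb A.one := by abel
    rw [this, h, emb_zero, zero_add]
  obtain ⟨w, hw⟩ := A.exists_left e
  exact A.add_one u w hw

theorem le_compl {u s t : E} (h : A.emb u + A.emb s = A.emb t) : A.le u (A.compl s) := by
  obtain ⟨r, hr⟩ := A.compl_exists t
  rw [← emb_add] at hr
  have e : A.emb s + (A.emb u + A.emb r) = A.emb A.one := by
    rw [← hr, ← h]; abel
  have hc : A.emb s + A.emb (A.compl s) = A.emb A.one :=
    Classical.epsilon_spec (p := fun b => A.oplus s b = some A.one) (A.compl_exists s)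
  exact ⟨r, A.emb_cancel e hc⟩

theorem homog_finset (hH : A.Homogeneous) {ι : Type*} [DecidableEq ι] (c : ι → E)
    (T : Finset ι) : ∀ u s x t : E, ∑ i ∈ T, A.emb (c i) = A.emb s → A.emb u + A.emb x = A.emb s →
      A.emb u + A.emb s = A.emb t →
      ∃ v z : ι → E, (∀ i ∈ T, A.emb (v i) + A.emb (z i) = A.emb (c i)) ∧
        ∑ i ∈ T, A.emb (v i) = A.emb u := by
  induction T using Finset.induction_on with
  | empty =>
    intro u s x t h1 h2 h3
    have hs : s = A.zero := by
      apply A.emb_inj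
      rw [← h1]; rfl
    subst hs
    have hu := A.eq_zero_of_add h2
    exact ⟨c, c, by simp, by rw [hu]; rfl⟩
  | insert i T hi ih =>
    intro u s x t h1 h2 h3
    rw [Finset.sum_insert hi] at h1
    obtain ⟨s2, hs2⟩ := A.exists_right h1
    rw [hs2] at h1
    obtain ⟨u1, u2, ⟨z1, hz1⟩, ⟨z2, hz2⟩, hu⟩ :=
      hH u (c i) s2 s h1 ⟨x, h2⟩ (A.le_compl h3)
    rw [← emb_add] at hz1 hz2 hu
    have e : (A.emb u2 + A.emb s2) + (A.emb u1 + A.emb (c i)) = A.emb t := by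
      rw [← h3, ← h1, ← hu]; abel
    obtain ⟨t2, ht2⟩ := A.exists_left e
    obtain ⟨v, z, hv, hsum⟩ := ih u2 s2 z2 t2 hs2 hz2 ht2
    refine ⟨Function.update v i u1, Function.update z i z1, ?_, ?_⟩
    · intro j hj
      by_cases hji : j = i
      · subst hji; simpa using hz1
      · have : j ∈ T := by simpa [hji] using hj
        simpa [hji] using hv j this
    · rw [Finset.sum_insert hi, Function.update_self, ← hu, ← hsum]
      congr 1
      apply Finset.sum_congr rfl
      intro j hj
      have : j ≠ i := fun h => hi (h ▸ hj)
      simp [this]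

theorem sumList_eq (L : List E) : A.toPE (A.sumList L) = (L.map A.emb).sum := by
  induction L with
  | nil => rfl
  | cons x xs ih =>
    rw [List.map_cons, List.sum_cons, ← ih]
    rfl

theorem sumList_pick (C : List E) (S : Finset (Fin C.length)) :
    A.toPE (A.sumList (pickList C S)) = ∑ i ∈ S, A.emb (C.get i) := by
  rw [sumList_eq, pickList, List.map_map, Finset.sum_eq_multiset_sum]
  conv_rhs => rw [← Finset.sort_eq S (· ≤ ·)]
  rw [Multiset.map_coe, Multiset.sum_coe]
  rfl

theorem sumList_all (C : List E) :
    A.toPE (A.sumList C) = ∑ i : Fin C.length, A.emb (C.get i) := by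
  rw [sumList_eq, ← List.sum_ofFn]
  congr 1
  apply List.ext_get <;> simp

theorem exists_cover {κ : Type*} [Fintype κ] (f : κ → E) (t : E)
    (ht : ∑ k, A.emb (f k) = A.emb t) (N : Set E)
    (hN : ∀ a ∈ N, ∃ S : Finset κ, ∑ k ∈ S, A.emb (f k) = A.emb a) :
    ∃ C : List E, A.IsCoverOf C N := by
  let e := (Fintype.equivFin κ)
  let C := List.ofFn (f ∘ e.symm)
  have hlen : Fintype.card κ = C.length := by simp [C]
  let g : κ ≃ Fin C.length := e.trans (finCongr hlen)
  have hg : ∀ k, C.get (g k) = f k := by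
    intro k
    simp [C, g]
  refine ⟨C, ?_, ?_⟩
  · have : A.toPE (A.sumList C) = A.emb t := by
      rw [sumList_all, ← ht, ← g.sum_comp]
      simp only [hg]
    have h' : A.sumList C = some t := this
    rw [h']; rfl
  · intro a ha
    obtain ⟨S, hS⟩ := hN a ha
    refine ⟨S.map g.toEmbedding, ?_⟩
    have := A.sumList_pick C (S.map g.toEmbedding)
    rw [Finset.sum_map] at this
    simp only [Equiv.coe_toEmbedding, hg] at this
    rw [hS] at this
    exact this

end EffectAlgebra

open EffectAlgebra in
theorem EffectAlgebra.aux_main {E : Type*} (A : EffectAlgebra E)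
    (hH : A.Homogeneous) (M : Set E) (a b d : E) (ha : a ∈ M) (hb : b ∈ M)
    (hd : A.emb b + A.emb d = A.emb a) (C : List E) (hC : A.IsCoverOf C M) :
    ∃ C : List E, A.IsCoverOf C (M ∪ {d}) := by
  obtain ⟨hC1, hC2⟩ := hC
  obtain ⟨t, ht⟩ := Option.isSome_iff_exists.1 hC1
  have ht : ∑ i, A.emb (C.get i) = A.emb t := by rw [← sumList_all]; exact ht
  have hC2 : ∀ a ∈ M, ∃ S : Finset (Fin C.length), ∑ i ∈ S, A.emb (C.get i) = A.emb a := by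
    intro a ha
    obtain ⟨S, hS⟩ := hC2 a ha
    exact ⟨S, by rw [← sumList_pick]; exact hS⟩
  obtain ⟨SA, hSA⟩ := hC2 a ha
  obtain ⟨SB, hSB⟩ := hC2 b hb
  generalize hc : C.get = c at *
  set T := SA \ SB with hT
  have eA : ∑ i ∈ SA ∩ SB, A.emb (c i) + ∑ i ∈ T, A.emb (c i) = A.emb a := by
    rw [← hSA]; exact Finset.sum_inter_add_sum_sdiff SA SB _
  have eB : ∑ i ∈ SA ∩ SB, A.emb (c i) + ∑ i ∈ SB \ SA, A.emb (c i) = A.emb b := by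
    rw [← hSB, Finset.inter_comm]; exact Finset.sum_inter_add_sum_sdiff SB SA _
  obtain ⟨w, hw⟩ := A.exists_left eA
  obtain ⟨y, hy⟩ := A.exists_right eA
  obtain ⟨x, hx⟩ := A.exists_right eB
  rw [hw, hy] at eA
  rw [hw, hx] at eB
  have hxd : A.emb x + A.emb d = A.emb y := by
    apply A.emb_cancel (a := w) (s := a) _ eA
    rw [← hd, ← eB, add_assoc]
  have hxy : ∃ r, A.emb x + A.emb y = A.emb r := by
    have hdis : Disjoint (SB \ SA) T := by
      rw [Finset.disjoint_left]; intro i; simp [hT]; tauto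
    rw [← hx, ← hy, ← Finset.sum_union hdis]
    rw [← Finset.sum_add_sum_compl (SB \ SA ∪ T)] at ht
    exact A.exists_left ht
  obtain ⟨r, hr⟩ := hxy
  obtain ⟨v, z, hvz, hv⟩ := A.homog_finset hH c T x y d r hy hxd hr
  let f : Fin C.length × Bool → E := fun p =>
    if p.1 ∈ T then (if p.2 then v p.1 else z p.1) else (if p.2 then A.zero else c p.1)
  have hf : ∀ i, A.emb (f (i, true)) + A.emb (f (i, false)) = A.emb (c i) := by
    intro i
    by_cases hi : i ∈ T
    · simpa [f, hi] using hvz i hi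
    · simp [f, hi, emb_zero]
  have hS : ∀ S : Finset (Fin C.length),
      ∑ p ∈ S ×ˢ (Finset.univ : Finset Bool), A.emb (f p) = ∑ i ∈ S, A.emb (c i) := by
    intro S
    rw [Finset.sum_product]
    apply Finset.sum_congr rfl
    intro i _
    rw [Fintype.sum_bool]
    exact hf i
  apply A.exists_cover f t
  · rw [← ht, ← hS, Finset.univ_product_univ]
  · rintro m (hm | hm)
    · obtain ⟨S, h⟩ := hC2 m hm
      exact ⟨_, (hS S).trans h⟩
    · rw [Set.mem_singleton_iff] at hm
      subst hm
      refine ⟨T ×ˢ {false}, ?_⟩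
      have e1 : ∑ p ∈ T ×ˢ {false}, A.emb (f p) = ∑ i ∈ T, A.emb (z i) := by
        rw [Finset.sum_product]
        apply Finset.sum_congr rfl
        intro i hi
        simp [f, hi]
      rw [e1]
      apply A.emb_cancel (a := x) (s := y) _ hxd
      rw [← hv, ← Finset.sum_add_distrib, ← hy]
      exact Finset.sum_congr rfl hvz

/-- If `M` is a finite compatible subset of a homogeneous effect
algebra and `a, b ∈ M` with `b ≤ a`, then `M ∪ {a ⊖ b}` is compatible. -/
theorem compatible_union_ominus {E : Type*} (A : EffectAlgebra E)
    (hH : A.Homogeneous) (M : Finset E) (hM : A.Compatible ↑M)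
    (a b : E) (ha : a ∈ M) (hb : b ∈ M) (hba : A.le b a) :
    A.Compatible (↑M ∪ {A.ominus a b}) := by
  intro F hF
  obtain ⟨C, -, hC⟩ := hM M (fun _ h => h)
  have hd : A.oplus b (A.ominus a b) = some a :=
    Classical.epsilon_spec (p := fun c => A.oplus b c = some a) hba
  obtain ⟨D, hD1, hD2⟩ := A.aux_main hH (↑M) a b _ ha hb hd C hC
  exact ⟨D, fun _ _ => trivial, hD1, fun m hm => hD2 m (hF hm)⟩
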